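/- Let (Ω, 𝒜, μ) be a measure space, p ∈ [1,∞), and T a positive C₀-semigroup on L_p(μ) with generator A. A T-admissible absorption rate V : Ω → [0,∞] is T-regular if and only if V is strongly T-regular. -/

import Mathlib

open MeasureTheory Filter Topology ENNReal

noncomputable section

namespace Absorption

variable {E : Type*} [NormedAddCommGroup E] [NormedSpace ℝ E]

/-- A one-parameter semigroup of bounded operators (for nonnegative times). -/
def IsSemigroup (T : ℝ → E →L[ℝ] E) : Prop :=
  T 0 = ContinuousLinearMap.id ℝ E ∧
    ∀ s t : ℝ, 0 ≤ s → 0 ≤ t → T (s + t) = (T s).comp (T t)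

/-- A `C₀`-semigroup: a one-parameter semigroup which is strongly continuous on `[0, ∞)`. -/
def IsC0Semigroup (T : ℝ → E →L[ℝ] E) : Prop :=
  IsSemigroup T ∧ ∀ f : E, ContinuousOn (fun t => T t f) (Set.Ici (0 : ℝ))

/-- `(f, g)` belongs to the graph of the generator of the semigroup `T`. -/
def InGenerator (T : ℝ → E →L[ℝ] E) (f g : E) : Prop :=
  Tendsto (fun t : ℝ => t⁻¹ • (T t f - f)) (𝓝[>] (0 : ℝ)) (𝓝 g)

variable {Ω : Type*} [MeasurableSpace Ω]

/-- A function into a measurable space is *locally measurable* (w.r.t. `μ`) if on every set of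
finite measure it coincides a.e. with a measurable function. -/
def LocallyMeasurable {α : Type*} [MeasurableSpace α] (μ : Measure Ω) (V : Ω → α) : Prop :=
  ∀ B : Set Ω, MeasurableSet B → μ B < ∞ →
    ∃ g : Ω → α, Measurable g ∧ ∀ᵐ ω ∂(μ.restrict B), V ω = g ω

/-- A set is a local `μ`-null set if its intersection with every measurable set of finite
measure is null. -/
def IsLocalNullSet (μ : Measure Ω) (N : Set Ω) : Prop :=
  ∀ B : Set Ω, MeasurableSet B → μ B < ∞ → μ (N ∩ B) = 0

/-- Positivity of a family of operators on `L_p` (for positive times). -/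
def IsPositiveSG {p : ℝ≥0∞} {μ : Measure Ω} [Fact (1 ≤ p)]
    (T : ℝ → Lp ℝ p μ →L[ℝ] Lp ℝ p μ) : Prop :=
  ∀ t : ℝ, 0 ≤ t → ∀ f : Lp ℝ p μ, 0 ≤ f → 0 ≤ T t f

/-- A band projection on the Banach lattice `L_p(μ)`: an idempotent operator `P`
with `0 ≤ P f ≤ f` for all `f ≥ 0`. -/
def IsBandProjection {p : ℝ≥0∞} {μ : Measure Ω} [Fact (1 ≤ p)]
    (P : Lp ℝ p μ →L[ℝ] Lp ℝ p μ) : Prop :=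
  P.comp P = P ∧ ∀ f : Lp ℝ p μ, 0 ≤ f → 0 ≤ P f ∧ P f ≤ f

/-- `S = (e^{t(A−W)})_{t ≥ 0}`: `S` is the `C₀`-semigroup whose generator is `A - W`,
where `A` is the generator of `T` and the bounded function `W` acts by multiplication. -/
def IsPerturbedSG (μ : Measure Ω) (p : ℝ≥0∞) [Fact (1 ≤ p)]
    (T S : ℝ → Lp ℝ p μ →L[ℝ] Lp ℝ p μ) (W : Ω → ℝ) : Prop :=
  IsC0Semigroup S ∧
    ∀ f g : Lp ℝ p μ, InGenerator S f g ↔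
      ∃ g₀ : Lp ℝ p μ, InGenerator T f g₀ ∧
        ⇑g =ᵐ[μ] fun ω => g₀ ω - W ω * f ω

/-- Same as `IsPerturbedSG`, for semigroups acting on a subspace `F` of `L_p(μ)`. -/
def IsPerturbedSGSub (μ : Measure Ω) (p : ℝ≥0∞) [Fact (1 ≤ p)] (F : Submodule ℝ (Lp ℝ p μ))
    (T S : ℝ → F →L[ℝ] F) (W : Ω → ℝ) : Prop :=
  IsC0Semigroup S ∧
    ∀ f g : F, InGenerator S f g ↔
      ∃ g₀ : F, InGenerator T f g₀ ∧
        ⇑(g : Lp ℝ p μ) =ᵐ[μ] fun ω => (g₀ : Lp ℝ p μ) ω - W ω * (f : Lp ℝ p μ) ω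

/-- The truncation `V ∧ n` of `V : Ω → [0,∞]`, as a real-valued function. -/
def trunc (V : Ω → ℝ≥0∞) (n : ℕ) : Ω → ℝ := fun ω => (min (V ω) (n : ℝ≥0∞)).toReal

/-- The scalar multiple `ε V` of an absorption rate `V : Ω → [0,∞]`. -/
def smulRate (ε : ℝ) (V : Ω → ℝ≥0∞) : Ω → ℝ≥0∞ := fun ω => ENNReal.ofReal ε * V ω

/-- The absorption rate `V - V ∧ n` (with value `∞` wherever `V = ∞`). -/
def resid (V : Ω → ℝ≥0∞) (n : ℕ) : Ω → ℝ≥0∞ := fun ω => V ω - min (V ω) (n : ℝ≥0∞)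

/-- `TV` is the absorption semigroup `T_V` associated with the rate `V : Ω → [0,∞]`, i.e.
the strong limit `T_V(t) = s-lim_{n→∞} e^{t(A - V∧n)}` (for `t ≥ 0`). -/
def IsAbsorptionSG (μ : Measure Ω) (p : ℝ≥0∞) [Fact (1 ≤ p)]
    (T : ℝ → Lp ℝ p μ →L[ℝ] Lp ℝ p μ) (V : Ω → ℝ≥0∞)
    (TV : ℝ → Lp ℝ p μ →L[ℝ] Lp ℝ p μ) : Prop :=
  ∃ S : ℕ → ℝ → Lp ℝ p μ →L[ℝ] Lp ℝ p μ,
    (∀ n, IsPerturbedSG μ p T (S n) (trunc V n)) ∧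
    ∀ t : ℝ, 0 ≤ t → ∀ f, Tendsto (fun n => S n t f) atTop (𝓝 (TV t f))

/-- `V : Ω → [0,∞]` is `T`-admissible: `V` is locally measurable, the strong limits
`T_V(t) = s-lim_{n→∞} e^{t(A - V∧n)}` exist, and `T_V` is a `C₀`-semigroup. -/
def Admissible (μ : Measure Ω) (p : ℝ≥0∞) [Fact (1 ≤ p)]
    (T : ℝ → Lp ℝ p μ →L[ℝ] Lp ℝ p μ) (V : Ω → ℝ≥0∞) : Prop :=
  LocallyMeasurable μ V ∧
  ∃ TV, IsAbsorptionSG μ p T V TV ∧ IsC0Semigroup TV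

/-- The truncation `(V ∧ n) ∨ (−n)` of an extended-real-valued rate, as a real function. -/
def truncE (V : Ω → EReal) (n : ℕ) : Ω → ℝ :=
  fun ω => (max (min (V ω) (n : EReal)) (-(n : EReal))).toReal

/-- `TV` is the absorption semigroup `T_V` of an extended-real-valued rate `V`:
`T_V(t) = s-lim_{n→∞} e^{t(A - (V∧n)∨(−n))}` (for `t ≥ 0`). -/
def IsAbsorptionSGE (μ : Measure Ω) (p : ℝ≥0∞) [Fact (1 ≤ p)]
    (T : ℝ → Lp ℝ p μ →L[ℝ] Lp ℝ p μ) (V : Ω → EReal)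
    (TV : ℝ → Lp ℝ p μ →L[ℝ] Lp ℝ p μ) : Prop :=
  ∃ S : ℕ → ℝ → Lp ℝ p μ →L[ℝ] Lp ℝ p μ,
    (∀ n, IsPerturbedSG μ p T (S n) (truncE V n)) ∧
    ∀ t : ℝ, 0 ≤ t → ∀ f, Tendsto (fun n => S n t f) atTop (𝓝 (TV t f))

/-- `T`-admissibility for an extended-real-valued absorption rate `V`. -/
def AdmissibleE (μ : Measure Ω) (p : ℝ≥0∞) [Fact (1 ≤ p)]
    (T : ℝ → Lp ℝ p μ →L[ℝ] Lp ℝ p μ) (V : Ω → EReal) : Prop :=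
  LocallyMeasurable μ V ∧
  ∃ TV, IsAbsorptionSGE μ p T V TV ∧ IsC0Semigroup TV

end Absorption

open Absorption

/-!
Write `V_k = V ∧ k`. For `f ≥ 0` the mass absorbed at level `k`,
`a_k = ∫₀ᵗ T(t - s) V_k T_{εV}(s) f ds`, increases with `k` and is bounded by `ε⁻¹ T(t) f`, because
`ε V_k ≤ ε V` and absorption at rate `ε V` removes at most the initial mass. The norm of `L_p` is
order continuous for `p < ∞`, so `a_k` converges. By Duhamel's formula the tail `lim a_k - a_n`
dominates `T_{εV}(t) f - T_{V - V_n}(t) f`, so `T_{V - V_n}(t) f` is asymptotically at least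
`T_{εV}(t) f`, while it is always at most `T(t) f`; letting `ε → 0` shows that regularity implies
strong regularity. Conversely `ε V ≤ ε n + (V - V_n)` gives
`e^{-εnt} T_{V - V_n}(t) ≤ T_{εV}(t) ≤ T(t)`; let first `ε → 0` and then `n → ∞`.
-/

namespace Absorption

section Semigroup

variable {E : Type*} [NormedAddCommGroup E] [NormedSpace ℝ E] {T S : ℝ → E →L[ℝ] E}

theorem IsC0Semigroup.apply_zero (hT : IsC0Semigroup T) (f : E) : T 0 f = f := by
  rw [hT.1.1, ContinuousLinearMap.id_apply]

theorem IsC0Semigroup.apply_add (hT : IsC0Semigroup T) {s t : ℝ} (hs : 0 ≤ s) (ht : 0 ≤ t)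
    (f : E) : T (s + t) f = T s (T t f) := by
  rw [hT.1.2 s t hs ht, ContinuousLinearMap.comp_apply]

theorem IsC0Semigroup.continuousOn_Icc (hT : IsC0Semigroup T) (f : E) (t : ℝ) :
    ContinuousOn (fun s => T s f) (Set.Icc 0 t) :=
  (hT.2 f).mono Set.Icc_subset_Ici_self

theorem IsC0Semigroup.continuous_max_zero (hT : IsC0Semigroup T) (f : E) :
    Continuous fun s => T (max s 0) f :=
  (hT.2 f).comp_continuous (by fun_prop) fun s => le_max_right s 0

theorem IsC0Semigroup.exp_smul (hT : IsC0Semigroup T) (c : ℝ) :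
    IsC0Semigroup fun t => Real.exp (-(c * t)) • T t := by
  refine ⟨⟨by simp [hT.1.1], fun s t hs ht => ?_⟩, fun f => ?_⟩
  · ext f
    simp only [smul_apply, ContinuousLinearMap.comp_apply, map_smul, hT.apply_add hs ht,
      smul_smul, ← Real.exp_add]
    congr 2
    ring
  · exact ContinuousOn.smul (by fun_prop) (hT.2 f)

theorem InGenerator.exp_smul {f g : E} (h : InGenerator T f g) (c : ℝ) :
    InGenerator (fun t => Real.exp (-(c * t)) • T t) f (g - c • f) := by
  have hderiv : HasDerivAt (fun t : ℝ => Real.exp (-(c * t))) (-c) 0 := by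
    simpa using ((hasDerivAt_id (0 : ℝ)).const_mul c).neg.exp
  have hslope : Tendsto (fun t : ℝ => t⁻¹ • (Real.exp (-(c * t)) - 1)) (𝓝[>] 0) (𝓝 (-c)) := by
    simpa using hderiv.tendsto_slope_zero_right
  have hone : Tendsto (fun t : ℝ => Real.exp (-(c * t))) (𝓝[>] 0) (𝓝 1) := by
    simpa using hderiv.continuousAt.tendsto.mono_left nhdsWithin_le_nhds
  have hlim : Tendsto (fun t : ℝ => Real.exp (-(c * t)) • t⁻¹ • (T t f - f)
      + (t⁻¹ • (Real.exp (-(c * t)) - 1)) • f) (𝓝[>] 0) (𝓝 (g - c • f)) := by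
    simpa [sub_eq_add_neg] using (hone.smul h).add (hslope.smul_const f)
  refine hlim.congr fun t => ?_
  rw [smul_apply]
  module

theorem inGenerator_exp_smul_iff {c : ℝ} {f g : E} :
    InGenerator (fun t => Real.exp (-(c * t)) • T t) f g ↔ InGenerator T f (g + c • f) := by
  refine ⟨fun h => ?_, fun h => by simpa using h.exp_smul c⟩
  simpa [smul_smul, ← Real.exp_add] using h.exp_smul (-c)

theorem InGenerator.const_smul {f g : E} (h : InGenerator T f g) (c : ℝ) :
    InGenerator T (c • f) (c • g) := by
  refine (Tendsto.const_smul h c).congr fun t => ?_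
  rw [map_smul, ← smul_sub, smul_comm]

theorem InGenerator.apply (hT : IsC0Semigroup T) {f g : E} (h : InGenerator T f g) {s : ℝ}
    (hs : 0 ≤ s) : InGenerator T (T s f) (T s g) := by
  refine (((T s).continuous.tendsto g).comp h).congr' ?_
  filter_upwards [self_mem_nhdsWithin] with r hr
  rw [Function.comp_apply, map_smul, map_sub, ← hT.apply_add hs hr.le, add_comm,
    hT.apply_add hr.le hs]

/-- The mild solution at time `t` of `u' = A u + v`, `u 0 = 0`, where `A` is the generator
of `T`. -/
def duhamelIntegral (T : ℝ → E →L[ℝ] E) (v : ℝ → E) (t : ℝ) : E :=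
  ∫ s in (0 : ℝ)..t, T (t - s) (v s)

theorem duhamelIntegral_neg (v : ℝ → E) (t : ℝ) :
    duhamelIntegral T (fun s => -v s) t = -duhamelIntegral T v t := by
  simp only [duhamelIntegral, map_neg, intervalIntegral.integral_neg]

theorem duhamelIntegral_smul (c : ℝ) (v : ℝ → E) (t : ℝ) :
    duhamelIntegral T (fun s => c • v s) t = c • duhamelIntegral T v t := by
  simp only [duhamelIntegral, map_smul, intervalIntegral.integral_smul]

theorem norm_duhamelIntegral_le {t K : ℝ} (ht : 0 ≤ t)
    (hK : ∀ s ∈ Set.Icc 0 t, ‖T s‖ ≤ K) {v : ℝ → E} (hv : ContinuousOn v (Set.Icc 0 t)) :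
    ‖duhamelIntegral T v t‖ ≤ K * ∫ s in (0 : ℝ)..t, ‖v s‖ := by
  have hint : IntervalIntegrable (fun s => ‖v s‖) volume 0 t :=
    ContinuousOn.intervalIntegrable (by rw [Set.uIcc_of_le ht]; exact hv.norm)
  rw [← intervalIntegral.integral_const_mul]
  refine intervalIntegral.norm_integral_le_of_norm_le ht (ae_of_all _ fun s hs => ?_)
    (hint.const_mul K)
  exact (T (t - s)).le_of_opNorm_le (hK _ ⟨by linarith [hs.2], by linarith [hs.1]⟩) _

variable [CompleteSpace E]

theorem IsC0Semigroup.exists_norm_le (hT : IsC0Semigroup T) (b : ℝ) :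
    ∃ M : ℝ, ∀ s ∈ Set.Icc 0 b, ‖T s‖ ≤ M := by
  have hpointwise : ∀ f : E, ∃ C, ∀ s : Set.Icc (0 : ℝ) b, ‖T s f‖ ≤ C := fun f =>
    let ⟨C, hC⟩ := isCompact_Icc.exists_bound_of_continuousOn (hT.continuousOn_Icc f b)
    ⟨C, fun s => hC s s.2⟩
  obtain ⟨M, hM⟩ := banach_steinhaus hpointwise
  exact ⟨M, fun s hs => hM ⟨s, hs⟩⟩

theorem IsC0Semigroup.tendsto_apply {ι : Type*} {l : Filter ι} (hT : IsC0Semigroup T)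
    {τ : ι → ℝ} {x : ι → E} {t : ℝ} {y : E} (hτ : ∀ᶠ i in l, 0 ≤ τ i) (ht : 0 ≤ t)
    (hτt : Tendsto τ l (𝓝 t)) (hx : Tendsto x l (𝓝 y)) :
    Tendsto (fun i => T (τ i) (x i)) l (𝓝 (T t y)) := by
  obtain ⟨M, hM⟩ := hT.exists_norm_le (t + 1)
  have horbit : Tendsto (fun i => T (τ i) y) l (𝓝 (T t y)) :=
    (hT.2 y t ht).tendsto.comp (tendsto_nhdsWithin_iff.2 ⟨hτt, hτ⟩)
  have herror : Tendsto (fun i => T (τ i) (x i - y)) l (𝓝 0) := by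
    refine squeeze_zero_norm' (a := fun i => M * ‖x i - y‖) ?_ ?_
    · filter_upwards [hτ, hτt.eventually_le_const (lt_add_one t)] with i h₀ h₁
      exact (T (τ i)).le_of_opNorm_le (hM _ ⟨h₀, h₁⟩) _
    · simpa using (tendsto_iff_norm_sub_tendsto_zero.1 hx).const_mul M
  simpa using horbit.add herror

theorem IsC0Semigroup.continuousOn_convolution (hT : IsC0Semigroup T) {t : ℝ} {v : ℝ → E}
    (hv : ContinuousOn v (Set.Icc 0 t)) :
    ContinuousOn (fun s => T (t - s) (v s)) (Set.Icc 0 t) := fun s hs => by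
  refine hT.tendsto_apply ?_ (sub_nonneg.2 hs.2) ?_ (hv s hs)
  · filter_upwards [self_mem_nhdsWithin] with r hr using sub_nonneg.2 hr.2
  · exact ((continuous_const.sub continuous_id).tendsto s).mono_left nhdsWithin_le_nhds

theorem IsC0Semigroup.intervalIntegrable_convolution (hT : IsC0Semigroup T) {t : ℝ}
    (ht : 0 ≤ t) {v : ℝ → E} (hv : ContinuousOn v (Set.Icc 0 t)) :
    IntervalIntegrable (fun s => T (t - s) (v s)) volume 0 t :=
  ContinuousOn.intervalIntegrable <| by
    rw [Set.uIcc_of_le ht]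
    exact hT.continuousOn_convolution hv

theorem duhamelIntegral_sub (hT : IsC0Semigroup T) {t : ℝ} (ht : 0 ≤ t) {v w : ℝ → E}
    (hv : ContinuousOn v (Set.Icc 0 t)) (hw : ContinuousOn w (Set.Icc 0 t)) :
    duhamelIntegral T (fun s => v s - w s) t = duhamelIntegral T v t - duhamelIntegral T w t := by
  simp only [duhamelIntegral, map_sub]
  exact intervalIntegral.integral_sub (hT.intervalIntegrable_convolution ht hv)
    (hT.intervalIntegrable_convolution ht hw)

theorem tendsto_duhamelIntegral (hT : IsC0Semigroup T) {t : ℝ} (ht : 0 ≤ t)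
    {v : ℕ → ℝ → E} {w : ℝ → E} {C : ℝ} (hv : ∀ n, ContinuousOn (v n) (Set.Icc 0 t))
    (hC : ∀ n, ∀ s ∈ Set.Icc 0 t, ‖v n s‖ ≤ C)
    (hlim : ∀ s ∈ Set.Icc 0 t, Tendsto (fun n => v n s) atTop (𝓝 (w s))) :
    Tendsto (fun n => duhamelIntegral T (v n) t) atTop (𝓝 (duhamelIntegral T w t)) := by
  obtain ⟨M, hM⟩ := hT.exists_norm_le t
  refine intervalIntegral.tendsto_integral_filter_of_dominated_convergence (fun _ => M * C)
    (.of_forall fun n => ?_) (.of_forall fun n => ae_of_all _ fun s hs => ?_) (by simp)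
    (ae_of_all _ fun s hs => ?_)
  · rw [Set.uIoc_of_le ht]
    exact (hT.intervalIntegrable_convolution ht (hv n)).1.aestronglyMeasurable
  all_goals
    rw [Set.uIoc_of_le ht] at hs
    have hs' := Set.Ioc_subset_Icc_self hs
  · exact (T (t - s)).le_of_opNorm_le_of_le (hM _ ⟨by linarith [hs.2], by linarith [hs.1]⟩)
      (hC n s hs')
  · exact ((T (t - s)).continuous.tendsto _).comp (hlim s hs')

theorem IsC0Semigroup.apply_integral_orbit (hT : IsC0Semigroup T) {r x : ℝ} (hr : 0 ≤ r)
    (hx : 0 ≤ x) (f : E) :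
    T r (∫ s in (0 : ℝ)..x, T (max s 0) f) =
      (∫ s in (0 : ℝ)..x + r, T (max s 0) f) - ∫ s in (0 : ℝ)..r, T (max s 0) f := by
  have hint := fun a b => (hT.continuous_max_zero f).intervalIntegrable (μ := volume) a b
  rw [intervalIntegral.integral_interval_sub_left (hint _ _) (hint _ _)]
  calc T r (∫ s in (0 : ℝ)..x, T (max s 0) f)
      = ∫ s in (0 : ℝ)..x, T r (T (max s 0) f) :=
        ((T r).intervalIntegral_comp_comm (hint _ _)).symm
    _ = ∫ s in (0 : ℝ)..x, T (max (s + r) 0) f := by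
        refine intervalIntegral.integral_congr fun s hs => ?_
        rw [Set.uIcc_of_le hx] at hs
        rw [max_eq_left hs.1, max_eq_left (add_nonneg hs.1 hr), add_comm s r,
          hT.apply_add hr hs.1]
    _ = ∫ s in r..x + r, T (max s 0) f := by
        rw [intervalIntegral.integral_comp_add_right (fun s => T (max s 0) f), zero_add]

theorem IsC0Semigroup.tendsto_inv_smul_integral_orbit (hT : IsC0Semigroup T) {x : ℝ}
    (hx : 0 ≤ x) (f : E) :
    Tendsto (fun r => r⁻¹ • ((∫ s in (0 : ℝ)..x + r, T (max s 0) f)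
      - ∫ s in (0 : ℝ)..x, T (max s 0) f)) (𝓝[>] 0) (𝓝 (T x f)) := by
  have h := ((hT.continuous_max_zero f).integral_hasStrictDerivAt 0 x).hasDerivAt
  rw [max_eq_left hx] at h
  exact h.tendsto_slope_zero_right

theorem IsC0Semigroup.inGenerator_integral_orbit (hT : IsC0Semigroup T) {x : ℝ} (hx : 0 ≤ x)
    (f : E) : InGenerator T (∫ s in (0 : ℝ)..x, T (max s 0) f) (T x f - f) := by
  have hlim := (hT.tendsto_inv_smul_integral_orbit hx f).sub
    (hT.tendsto_inv_smul_integral_orbit le_rfl f)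
  rw [hT.apply_zero] at hlim
  refine hlim.congr' ?_
  filter_upwards [self_mem_nhdsWithin] with r hr
  rw [hT.apply_integral_orbit hr.le hx, intervalIntegral.integral_same, zero_add, ← smul_sub]
  congr 1
  abel

theorem IsC0Semigroup.dense_domain (hT : IsC0Semigroup T) :
    Dense {f : E | ∃ g, InGenerator T f g} := fun f => by
  have hlim := hT.tendsto_inv_smul_integral_orbit le_rfl f
  simp only [zero_add, intervalIntegral.integral_same, sub_zero, hT.apply_zero] at hlim
  refine mem_closure_of_tendsto hlim ?_
  filter_upwards [self_mem_nhdsWithin] with r hr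
  exact ⟨_, (hT.inGenerator_integral_orbit hr.le f).const_smul r⁻¹⟩

theorem hasDerivWithinAt_interpolation (hT : IsC0Semigroup T) (hS : IsC0Semigroup S)
    {f gT gS : E} {x t : ℝ} (hx : 0 ≤ x) (hxt : x < t) (hgT : InGenerator T (S x f) gT)
    (hgS : InGenerator S (S x f) gS) :
    HasDerivWithinAt (fun s => T (t - s) (S s f)) (T (t - x) (gS - gT)) (Set.Ioi x) x := by
  have hshift : Tendsto (fun y => y - x) (𝓝[>] x) (𝓝[>] 0) := by
    refine tendsto_nhdsWithin_iff.2 ⟨Tendsto.mono_left ?_ nhdsWithin_le_nhds, ?_⟩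
    · simpa using (continuous_sub_right x).tendsto x
    · filter_upwards [self_mem_nhdsWithin] with y hy using sub_pos.2 (Set.mem_Ioi.1 hy)
  have hquot := (hgS.sub hgT).comp hshift
  have hnear : ∀ᶠ y in 𝓝[>] x, y ∈ Set.Ioo x t := Ioo_mem_nhdsGT hxt
  have hlim := hT.tendsto_apply (hnear.mono fun y hy => sub_nonneg.2 hy.2.le)
    (sub_nonneg.2 hxt.le)
    (((continuous_sub_left t).tendsto x).mono_left nhdsWithin_le_nhds) hquot
  rw [hasDerivWithinAt_iff_tendsto_slope' Set.self_notMem_Ioi]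
  refine hlim.congr' ?_
  filter_upwards [hnear] with y hy
  have hSy : S y f = S (y - x) (S x f) := by
    rw [← hS.apply_add (sub_nonneg.2 hy.1.le) hx, sub_add_cancel]
  have hTx : T (t - x) (S x f) = T (t - y) (T (y - x) (S x f)) := by
    rw [← hT.apply_add (sub_nonneg.2 hy.2.le) (sub_nonneg.2 hy.1.le), sub_add_sub_cancel]
  rw [slope_def_module, hTx, hSy, Function.comp_apply, ← smul_sub, map_smul, ← map_sub]
  congr 2
  abel

theorem sub_eq_duhamelIntegral_of_inGenerator (hT : IsC0Semigroup T) (hS : IsC0Semigroup S)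
    {B : E →L[ℝ] E} (hB : ∀ f g, InGenerator S f g → InGenerator T f (g + B f)) {t : ℝ}
    (ht : 0 ≤ t) {f g : E} (hfg : InGenerator S f g) :
    T t f - S t f = duhamelIntegral T (fun s => B (S s f)) t := by
  have hderiv : ∀ x ∈ Set.Ioo 0 t, HasDerivWithinAt (fun s => T (t - s) (S s f))
      (-T (t - x) (B (S x f))) (Set.Ioi x) x := fun x hx => by
    have hg := hfg.apply hS hx.1.le
    simpa using hasDerivWithinAt_interpolation hT hS hx.1.le hx.2 (hB _ _ hg) hg
  have hftc := intervalIntegral.integral_eq_sub_of_hasDeriv_right_of_le ht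
    (hT.continuousOn_convolution (hS.continuousOn_Icc f t)) hderiv
    (hT.intervalIntegrable_convolution ht
      (B.continuous.comp_continuousOn (hS.continuousOn_Icc f t))).neg
  rw [intervalIntegral.integral_neg, sub_self, sub_zero, hT.apply_zero, hS.apply_zero] at hftc
  rw [duhamelIntegral, ← neg_sub, ← hftc, neg_neg]

theorem sub_eq_duhamelIntegral (hT : IsC0Semigroup T) (hS : IsC0Semigroup S)
    {B : E →L[ℝ] E} (hB : ∀ f g, InGenerator S f g → InGenerator T f (g + B f)) {t : ℝ}
    (ht : 0 ≤ t) (f : E) : T t f - S t f = duhamelIntegral T (fun s => B (S s f)) t := by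
  obtain ⟨x, hx, hxf⟩ := mem_closure_iff_seq_limit.1 (hS.dense_domain f)
  choose g hg using hx
  obtain ⟨M, hM⟩ := hS.exists_norm_le t
  obtain ⟨C, hC⟩ := hxf.norm.bddAbove_range
  have hlim : Tendsto (fun n => duhamelIntegral T (fun s => B (S s (x n))) t) atTop
      (𝓝 (duhamelIntegral T (fun s => B (S s f)) t)) := by
    refine tendsto_duhamelIntegral hT ht (C := ‖B‖ * (M * C))
      (fun n => B.continuous.comp_continuousOn (hS.continuousOn_Icc (x n) t))
      (fun n s hs => B.le_opNorm_of_le ?_) fun s _ => ?_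
    · exact (S s).le_of_opNorm_le_of_le (hM s hs) (hC ⟨n, rfl⟩)
    · exact ((B.continuous.comp (S s).continuous).tendsto f).comp hxf
  have hleft : Tendsto (fun n => T t (x n) - S t (x n)) atTop (𝓝 (T t f - S t f)) :=
    (((T t).continuous.tendsto f).comp hxf).sub (((S t).continuous.tendsto f).comp hxf)
  refine tendsto_nhds_unique hleft (hlim.congr fun n => ?_)
  rw [sub_eq_duhamelIntegral_of_inGenerator hT hS hB ht (hg n)]

end Semigroup

section OrderedSpace

variable {E : Type*} [NormedAddCommGroup E] [NormedSpace ℝ E] [PartialOrder E]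
  {T S S₁ S₂ U R U₁ U₂ : ℝ → E →L[ℝ] E} {B B₁ B₂ M : E →L[ℝ] E} {f : E} {t : ℝ}

/-- A `C₀`-semigroup of positive operators. -/
structure IsPositiveC0Semigroup (T : ℝ → E →L[ℝ] E) : Prop where
  c0 : IsC0Semigroup T
  monotone : ∀ t, 0 ≤ t → Monotone (T t)

/-- `S` is a positive `C₀`-semigroup with generator `A - B`, where `A` is the generator
of `T`. -/
structure IsPositivePerturbation (T S : ℝ → E →L[ℝ] E) (B : E →L[ℝ] E) : Prop
    extends IsPositiveC0Semigroup S where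
  inGenerator_iff : ∀ f g, InGenerator S f g ↔ InGenerator T f (g + B f)

/-- `U` is the strong limit of positive `C₀`-semigroups with generators `A - B n`, where `A` is
the generator of `T` and the `B n` are positive operators. -/
structure IsAbsorptionLimit (T : ℝ → E →L[ℝ] E) (B : ℕ → E →L[ℝ] E) (U : ℝ → E →L[ℝ] E) :
    Prop where
  monotone : ∀ n, Monotone (B n)
  exists_tendsto : ∃ S : ℕ → ℝ → E →L[ℝ] E, (∀ n, IsPositivePerturbation T (S n) (B n)) ∧
    ∀ t, 0 ≤ t → ∀ f, Tendsto (fun n => S n t f) atTop (𝓝 (U t f))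

theorem IsPositiveC0Semigroup.exp_smul [IsOrderedModule ℝ E] (hT : IsPositiveC0Semigroup T)
    (c : ℝ) : IsPositiveC0Semigroup fun t => Real.exp (-(c * t)) • T t :=
  ⟨hT.c0.exp_smul c, fun t ht _ _ h =>
    smul_le_smul_of_nonneg_left (hT.monotone t ht h) (Real.exp_pos _).le⟩

theorem IsPositiveC0Semigroup.isPositivePerturbation_exp_smul [IsOrderedModule ℝ E]
    (hT : IsPositiveC0Semigroup T) (c : ℝ) :
    IsPositivePerturbation T (fun t => Real.exp (-(c * t)) • T t)
      (c • ContinuousLinearMap.id ℝ E) :=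
  ⟨hT.exp_smul c, fun _ _ => inGenerator_exp_smul_iff⟩

theorem IsPositivePerturbation.sub (h₁ : IsPositivePerturbation T S₁ B₁)
    (h₂ : IsPositivePerturbation T S₂ B₂) : IsPositivePerturbation S₁ S₂ (B₂ - B₁) :=
  ⟨h₂.toIsPositiveC0Semigroup, fun f g => by
    rw [h₂.inGenerator_iff, h₁.inGenerator_iff, sub_apply, add_assoc, sub_add_cancel]⟩

theorem IsPositivePerturbation.sub_apply_eq [CompleteSpace E]
    (h : IsPositivePerturbation T S B) (hT : IsC0Semigroup T) (ht : 0 ≤ t) (f : E) :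
    T t f - S t f = duhamelIntegral T (fun s => B (S s f)) t :=
  sub_eq_duhamelIntegral hT h.c0 (fun f g => (h.inGenerator_iff f g).1) ht f

variable [IsOrderedAddMonoid E]

theorem map_nonneg_of_monotone (hB : Monotone B) (hf : 0 ≤ f) : 0 ≤ B f :=
  (monotone_iff_map_nonneg B).1 hB f hf

theorem apply_le_apply_of_monotone_sub (hB : Monotone (B₂ - B₁)) (hf : 0 ≤ f) :
    B₁ f ≤ B₂ f :=
  sub_nonneg.1 (map_nonneg_of_monotone hB hf)

theorem IsPositiveC0Semigroup.apply_nonneg (hT : IsPositiveC0Semigroup T) (ht : 0 ≤ t)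
    (hf : 0 ≤ f) : 0 ≤ T t f :=
  map_nonneg_of_monotone (hT.monotone t ht) hf

theorem IsAbsorptionLimit.apply_nonneg [OrderClosedTopology E] {B : ℕ → E →L[ℝ] E}
    (hU : IsAbsorptionLimit T B U) (ht : 0 ≤ t) (hf : 0 ≤ f) : 0 ≤ U t f := by
  obtain ⟨S, hS, hlim⟩ := hU.exists_tendsto
  exact ge_of_tendsto' (hlim t ht f) fun n => (hS n).apply_nonneg ht hf

variable [IsOrderedModule ℝ E] [OrderClosedTopology E]

theorem duhamelIntegral_nonneg {v : ℝ → E} (ht : 0 ≤ t)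
    (h : ∀ s ∈ Set.Icc 0 t, 0 ≤ T (t - s) (v s)) : 0 ≤ duhamelIntegral T v t := by
  rw [duhamelIntegral, intervalIntegral.integral_of_le ht]
  exact integral_nonneg_of_ae ((ae_restrict_iff' measurableSet_Ioc).2
    (ae_of_all _ fun s hs => h s (Set.Ioc_subset_Icc_self hs)))

variable [CompleteSpace E]

theorem duhamelIntegral_mono (hT : IsC0Semigroup T) (hS : IsC0Semigroup S) {v w : ℝ → E}
    (ht : 0 ≤ t) (hv : ContinuousOn v (Set.Icc 0 t)) (hw : ContinuousOn w (Set.Icc 0 t))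
    (h : ∀ s ∈ Set.Icc 0 t, T (t - s) (v s) ≤ S (t - s) (w s)) :
    duhamelIntegral T v t ≤ duhamelIntegral S w t := by
  simp only [duhamelIntegral, intervalIntegral.integral_of_le ht]
  exact integral_mono_ae (hT.intervalIntegrable_convolution ht hv).1
    (hS.intervalIntegrable_convolution ht hw).1 ((ae_restrict_iff' measurableSet_Ioc).2
      (ae_of_all _ fun s hs => h s (Set.Ioc_subset_Icc_self hs)))

theorem IsPositivePerturbation.apply_le (h : IsPositivePerturbation T S B)
    (hT : IsPositiveC0Semigroup T) (hB : Monotone B) (ht : 0 ≤ t) (hf : 0 ≤ f) :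
    S t f ≤ T t f := by
  rw [← sub_nonneg, h.sub_apply_eq hT.c0 ht]
  exact duhamelIntegral_nonneg ht fun s hs => hT.apply_nonneg (sub_nonneg.2 hs.2)
    (map_nonneg_of_monotone hB (h.apply_nonneg hs.1 hf))

theorem IsPositivePerturbation.exp_smul_apply_le (h₁ : IsPositivePerturbation T S₁ B₁)
    (h₂ : IsPositivePerturbation T S₂ B₂) {d : ℝ}
    (hd : Monotone (d • ContinuousLinearMap.id ℝ E - (B₂ - B₁))) (ht : 0 ≤ t) (hf : 0 ≤ f) :
    Real.exp (-(d * t)) • S₁ t f ≤ S₂ t f :=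
  ((h₁.sub h₂).sub (h₁.isPositivePerturbation_exp_smul d)).apply_le
    h₂.toIsPositiveC0Semigroup hd ht hf

theorem IsPositivePerturbation.sub_apply_le (hU : IsPositivePerturbation T U B)
    (hR : IsPositivePerturbation T R M) (hT : IsPositiveC0Semigroup T) (hB : Monotone B)
    (hM : Monotone M) (ht : 0 ≤ t) (hf : 0 ≤ f) :
    U t f - R t f ≤ duhamelIntegral T (fun s => M (U s f)) t := by
  have hcont := hU.c0.continuousOn_Icc f t
  rw [← neg_sub, (hR.sub hU).sub_apply_eq hR.c0 ht, ← duhamelIntegral_neg]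
  refine duhamelIntegral_mono hR.c0 hT.c0 ht ((B - M).continuous.comp_continuousOn hcont).neg
    (M.continuous.comp_continuousOn hcont) fun s hs => ?_
  have hUs : 0 ≤ U s f := hU.apply_nonneg hs.1 hf
  have hts : 0 ≤ t - s := sub_nonneg.2 hs.2
  calc R (t - s) (-((B - M) (U s f))) ≤ R (t - s) (M (U s f)) := hR.monotone _ hts <| by
        rw [sub_apply, neg_sub]
        exact sub_le_self _ (map_nonneg_of_monotone hB hUs)
    _ ≤ T (t - s) (M (U s f)) := hR.apply_le hT hM hts (map_nonneg_of_monotone hM hUs)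

theorem IsAbsorptionLimit.apply_le {B : ℕ → E →L[ℝ] E} (hU : IsAbsorptionLimit T B U)
    (hT : IsPositiveC0Semigroup T) (ht : 0 ≤ t) (hf : 0 ≤ f) : U t f ≤ T t f := by
  obtain ⟨S, hS, hlim⟩ := hU.exists_tendsto
  exact le_of_tendsto' (hlim t ht f) fun n => (hS n).apply_le hT (hU.monotone n) ht hf

theorem IsAbsorptionLimit.exp_smul_apply_le {B₁ B₂ : ℕ → E →L[ℝ] E}
    (h₁ : IsAbsorptionLimit T B₁ U₁) (h₂ : IsAbsorptionLimit T B₂ U₂) {d : ℝ}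
    (hd : ∀ n, Monotone (d • ContinuousLinearMap.id ℝ E - (B₂ n - B₁ n))) (ht : 0 ≤ t)
    (hf : 0 ≤ f) : Real.exp (-(d * t)) • U₁ t f ≤ U₂ t f := by
  obtain ⟨S₁, hS₁, hlim₁⟩ := h₁.exists_tendsto
  obtain ⟨S₂, hS₂, hlim₂⟩ := h₂.exists_tendsto
  exact le_of_tendsto_of_tendsto' ((hlim₁ t ht f).const_smul _) (hlim₂ t ht f) fun n =>
    (hS₁ n).exp_smul_apply_le (hS₂ n) (hd n) ht hf

end OrderedSpace

/-- Order continuity of the norm of a Banach lattice, expressed by the equivalent condition that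
order bounded increasing sequences converge. -/
class HasOrderContinuousNorm (E : Type*) [TopologicalSpace E] [Preorder E] : Prop where
  exists_tendsto : ∀ a : ℕ → E, Monotone a → BddAbove (Set.range a) → ∃ x, Tendsto a atTop (𝓝 x)

theorem eq_zero_of_le_mul_integral {φ : ℝ → ℝ} {K a b : ℝ} (hφ : ContinuousOn φ (Set.Icc a b))
    (hnonneg : ∀ x ∈ Set.Icc a b, 0 ≤ φ x)
    (hle : ∀ x ∈ Set.Icc a b, φ x ≤ K * ∫ s in a..x, φ s) : ∀ x ∈ Set.Icc a b, φ x = 0 := by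
  intro x hx
  have hab : a ≤ b := hx.1.trans hx.2
  have hint : IntegrableOn φ (Set.uIcc a b) := by
    rw [Set.uIcc_of_le hab]
    exact hφ.integrableOn_Icc
  have hzero := eq_zero_of_abs_deriv_le_mul_abs_self_of_eq_zero_right (K := K)
    (f := fun x => ∫ s in a..x, φ s) (f' := φ)
    (by simpa only [Set.uIcc_of_le hab] using
      intervalIntegral.continuousOn_primitive_interval hint) (fun y hy => ?_)
    intervalIntegral.integral_same (fun y hy => ?_) x hx
  · exact le_antisymm (by simpa only [hzero, mul_zero] using hle x hx) (hnonneg x hx)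
  · have hnear : 𝓝[>] y ≤ 𝓝[Set.Icc a b] y :=
      nhdsWithin_le_of_mem (mem_of_superset (Ioo_mem_nhdsGT hy.2)
        (Set.Ioo_subset_Icc_self.trans (Set.Icc_subset_Icc_left hy.1)))
    refine intervalIntegral.integral_hasDerivWithinAt_right (t := Set.Ioi y) ?_ ?_ ?_
    · exact (hφ.mono (Set.Icc_subset_Icc_right hy.2.le)).intervalIntegrable_of_Icc hy.1
    · exact (hφ.stronglyMeasurableAtFilter_nhdsWithin measurableSet_Icc y).filter_mono hnear
    · exact (hφ y (Set.Ico_subset_Icc_self hy)).mono_left hnear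
  · have hy' := Set.Ico_subset_Icc_self hy
    rw [Real.norm_of_nonneg (hnonneg y hy'), Real.norm_of_nonneg
      (intervalIntegral.integral_nonneg hy.1 fun s hs => hnonneg s ⟨hs.1, hs.2.trans hy'.2⟩)]
    exact hle y hy'

section BanachLattice

variable {E : Type*} [NormedAddCommGroup E] [Lattice E] [IsOrderedAddMonoid E]

theorem norm_le_norm_of_nonneg_of_le [HasSolidNorm E] {f g : E} (hf : 0 ≤ f)
    (hfg : f ≤ g) : ‖f‖ ≤ ‖g‖ :=
  norm_le_norm_of_abs_le_abs <| by rwa [abs_of_nonneg hf, abs_of_nonneg (hf.trans hfg)]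

theorem tendsto_of_approx_le [HasSolidNorm E] {ι κ : Type*} {l : Filter ι} {l' : Filter κ}
    [l'.NeBot] {x : ι → E} {y : E} {z : κ → E} (hz : Tendsto z l' (𝓝 y))
    (hle : ∀ᶠ i in l, x i ≤ y)
    (hge : ∀ᶠ k in l', ∃ c : ι → E, Tendsto c l (𝓝 (z k)) ∧ ∀ᶠ i in l, c i ≤ x i) :
    Tendsto x l (𝓝 y) := by
  refine Metric.tendsto_nhds.2 fun η hη => ?_
  obtain ⟨k, ⟨c, hc, hcx⟩, hzy⟩ := (hge.and (Metric.tendsto_nhds.1 hz η hη)).exists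
  filter_upwards [hle, hcx, (hc.dist tendsto_const_nhds).eventually_lt_const hzy]
    with i hxy hcxi hcy
  refine lt_of_le_of_lt ?_ hcy
  rw [dist_comm, dist_comm (c i), dist_eq_norm, dist_eq_norm]
  exact norm_le_norm_of_nonneg_of_le (sub_nonneg.2 hxy) (sub_le_sub_left hcxi y)

theorem tendsto_apply_of_forall_nonneg [NormedSpace ℝ E] {ι : Type*} {l : Filter ι}
    {S : ι → E →L[ℝ] E} {T : E →L[ℝ] E}
    (h : ∀ f, 0 ≤ f → Tendsto (fun i => S i f) l (𝓝 (T f))) (f : E) :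
    Tendsto (fun i => S i f) l (𝓝 (T f)) := by
  simpa only [← map_sub, posPart_sub_negPart]
    using (h _ (posPart_nonneg f)).sub (h _ (negPart_nonneg f))

variable [HasSolidNorm E] [NormedSpace ℝ E] [IsOrderedModule ℝ E] [CompleteSpace E]
  {T S U : ℝ → E →L[ℝ] E} {B L M N : E →L[ℝ] E} {f : E} {t : ℝ}

theorem IsPositiveC0Semigroup.negPart_apply_le (hT : IsPositiveC0Semigroup T)
    (hS : IsC0Semigroup S) (hN : Monotone N)
    (hgen : ∀ f g, InGenerator S f g → InGenerator T f (g - N f)) (ht : 0 ≤ t) (hf : 0 ≤ f) :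
    (S t f)⁻ ≤ duhamelIntegral T (fun s => N (S s f)⁻) t := by
  have hduhamel : -S t f + T t f = duhamelIntegral T (fun s => N (-S s f)) t := by
    simpa [neg_add_eq_sub] using sub_eq_duhamelIntegral (B := -N) hT.c0 hS
      (fun f g h => by simpa [sub_eq_add_neg] using hgen f g h) ht f
  have hcont := hS.continuousOn_Icc f t
  rw [negPart_def]
  refine sup_le ?_ (duhamelIntegral_nonneg ht fun s hs => ?_)
  · calc -S t f ≤ -S t f + T t f := le_add_of_nonneg_right (hT.apply_nonneg ht hf)
      _ = duhamelIntegral T (fun s => N (-S s f)) t := hduhamel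
      _ ≤ duhamelIntegral T (fun s => N (S s f)⁻) t :=
        duhamelIntegral_mono hT.c0 hT.c0 ht
          (N.continuous.comp_continuousOn hcont.neg)
          (N.continuous.comp_continuousOn (continuous_negPart.comp_continuousOn hcont))
          fun s hs => hT.monotone _ (sub_nonneg.2 hs.2) (hN (neg_le_negPart _))
  · exact hT.apply_nonneg (sub_nonneg.2 hs.2) (map_nonneg_of_monotone hN (negPart_nonneg _))

theorem IsPositiveC0Semigroup.of_monotone_perturbation (hT : IsPositiveC0Semigroup T)
    (hS : IsC0Semigroup S) (hN : Monotone N)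
    (hgen : ∀ f g, InGenerator S f g → InGenerator T f (g - N f)) :
    IsPositiveC0Semigroup S := by
  refine ⟨hS, fun b hb => (monotone_iff_map_nonneg _).2 fun f hf => ?_⟩
  obtain ⟨K, hK⟩ := hT.c0.exists_norm_le b
  have hTN : ∀ s ∈ Set.Icc 0 b, ‖(T s).comp N‖ ≤ K * ‖N‖ := fun s hs =>
    ((T s).opNorm_comp_le N).trans (mul_le_mul_of_nonneg_right (hK s hs) (norm_nonneg N))
  have hneg : ContinuousOn (fun s => (S s f)⁻) (Set.Icc 0 b) :=
    continuous_negPart.comp_continuousOn (hS.continuousOn_Icc f b)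
  have hgronwall : ∀ x ∈ Set.Icc 0 b, ‖(S x f)⁻‖ ≤ K * ‖N‖ * ∫ s in (0 : ℝ)..x, ‖(S s f)⁻‖ := by
    intro x hx
    calc ‖(S x f)⁻‖
        ≤ ‖duhamelIntegral (fun s => (T s).comp N) (fun s => (S s f)⁻) x‖ :=
          norm_le_norm_of_nonneg_of_le (negPart_nonneg _)
            (hT.negPart_apply_le hS hN hgen hx.1 hf)
      _ ≤ K * ‖N‖ * ∫ s in (0 : ℝ)..x, ‖(S s f)⁻‖ :=
          norm_duhamelIntegral_le hx.1 (fun s hs => hTN s ⟨hs.1, hs.2.trans hx.2⟩)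
            (hneg.mono (Set.Icc_subset_Icc_right hx.2))
  have hzero := eq_zero_of_le_mul_integral hneg.norm (fun x _ => norm_nonneg _) hgronwall b
    ⟨hb, le_rfl⟩
  exact negPart_eq_zero.1 (norm_eq_zero.1 hzero)

theorem IsPositiveC0Semigroup.isPositivePerturbation (hT : IsPositiveC0Semigroup T)
    (hS : IsC0Semigroup S) (hgen : ∀ f g, InGenerator S f g ↔ InGenerator T f (g + B f))
    {c : ℝ} (hB : Monotone (c • ContinuousLinearMap.id ℝ E - B)) :
    IsPositivePerturbation T S B where
  toIsPositiveC0Semigroup := (hT.exp_smul c).of_monotone_perturbation hS hB fun f g h =>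
    inGenerator_exp_smul_iff.2 <| by simpa [sub_add] using (hgen f g).1 h
  inGenerator_iff := hgen

theorem IsPositivePerturbation.tendsto_duhamelIntegral (hT : IsPositiveC0Semigroup T)
    {B : ℕ → E →L[ℝ] E} {S : ℕ → ℝ → E →L[ℝ] E} (hB : ∀ n, Monotone (B n))
    (hS : ∀ n, IsPositivePerturbation T (S n) (B n)) (ht : 0 ≤ t) (hf : 0 ≤ f)
    (hlim : ∀ s, 0 ≤ s → Tendsto (fun n => S n s f) atTop (𝓝 (U s f))) (L : E →L[ℝ] E) :
    Tendsto (fun n => duhamelIntegral T (fun s => L (S n s f)) t) atTop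
      (𝓝 (duhamelIntegral T (fun s => L (U s f)) t)) := by
  obtain ⟨C, hC⟩ := isCompact_Icc.exists_bound_of_continuousOn (hT.c0.continuousOn_Icc f t)
  refine Absorption.tendsto_duhamelIntegral hT.c0 ht (C := ‖L‖ * C)
    (fun n => L.continuous.comp_continuousOn ((hS n).c0.continuousOn_Icc f t))
    (fun n s hs => L.le_opNorm_of_le ?_)
    fun s hs => (L.continuous.tendsto _).comp (hlim s hs.1)
  exact (norm_le_norm_of_nonneg_of_le ((hS n).apply_nonneg hs.1 hf)
    ((hS n).apply_le hT (hB n) hs.1 hf)).trans (hC s hs)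

variable {B : ℕ → E →L[ℝ] E}

theorem IsAbsorptionLimit.duhamelIntegral_sub (hU : IsAbsorptionLimit T B U)
    (hT : IsPositiveC0Semigroup T) (ht : 0 ≤ t) (hf : 0 ≤ f) (L M : E →L[ℝ] E) :
    duhamelIntegral T (fun s => (L - M) (U s f)) t =
      duhamelIntegral T (fun s => L (U s f)) t - duhamelIntegral T (fun s => M (U s f)) t := by
  obtain ⟨S, hS, hlim⟩ := hU.exists_tendsto
  have hconv := IsPositivePerturbation.tendsto_duhamelIntegral hT hU.monotone hS ht hf
    fun s hs => hlim s hs f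
  refine tendsto_nhds_unique (hconv (L - M)) (((hconv L).sub (hconv M)).congr fun n => ?_)
  have hcont := (hS n).c0.continuousOn_Icc f t
  exact (Absorption.duhamelIntegral_sub hT.c0 ht (L.continuous.comp_continuousOn hcont)
    (M.continuous.comp_continuousOn hcont)).symm

theorem IsAbsorptionLimit.duhamelIntegral_mono (hU : IsAbsorptionLimit T B U)
    (hT : IsPositiveC0Semigroup T) (ht : 0 ≤ t) (hf : 0 ≤ f) (hLM : Monotone (M - L)) :
    duhamelIntegral T (fun s => L (U s f)) t ≤ duhamelIntegral T (fun s => M (U s f)) t := by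
  rw [← sub_nonneg, ← hU.duhamelIntegral_sub hT ht hf]
  exact duhamelIntegral_nonneg ht fun s hs => hT.apply_nonneg (sub_nonneg.2 hs.2)
    (map_nonneg_of_monotone hLM (hU.apply_nonneg hs.1 hf))

theorem IsAbsorptionLimit.duhamelIntegral_le_apply (hU : IsAbsorptionLimit T B U)
    (hT : IsPositiveC0Semigroup T) (ht : 0 ≤ t) (hf : 0 ≤ f)
    (hBL : ∀ᶠ n in atTop, Monotone (B n - L)) :
    duhamelIntegral T (fun s => L (U s f)) t ≤ T t f := by
  obtain ⟨S, hS, hlim⟩ := hU.exists_tendsto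
  refine le_of_tendsto (IsPositivePerturbation.tendsto_duhamelIntegral hT hU.monotone hS ht hf
    (fun s hs => hlim s hs f) L) (hBL.mono fun n hn => ?_)
  have hcont := (hS n).c0.continuousOn_Icc f t
  calc duhamelIntegral T (fun s => L (S n s f)) t
      ≤ duhamelIntegral T (fun s => B n (S n s f)) t :=
        Absorption.duhamelIntegral_mono hT.c0 hT.c0 ht (L.continuous.comp_continuousOn hcont)
          ((B n).continuous.comp_continuousOn hcont) fun s hs =>
            hT.monotone _ (sub_nonneg.2 hs.2)
              (apply_le_apply_of_monotone_sub hn ((hS n).apply_nonneg hs.1 hf))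
    _ = T t f - S n t f := ((hS n).sub_apply_eq hT.c0 ht f).symm
    _ ≤ T t f := sub_le_self _ ((hS n).apply_nonneg ht hf)

theorem IsAbsorptionLimit.sub_apply_le (hU : IsAbsorptionLimit T B U)
    (hT : IsPositiveC0Semigroup T) {R : ℝ → E →L[ℝ] E} (hR : IsPositivePerturbation T R M)
    (hM : Monotone M) (ht : 0 ≤ t) (hf : 0 ≤ f) :
    U t f - R t f ≤ duhamelIntegral T (fun s => M (U s f)) t := by
  obtain ⟨S, hS, hlim⟩ := hU.exists_tendsto
  exact le_of_tendsto_of_tendsto' ((hlim t ht f).sub_const _)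
    (IsPositivePerturbation.tendsto_duhamelIntegral hT hU.monotone hS ht hf
      (fun s hs => hlim s hs f) M)
    fun n => (hS n).sub_apply_le hR hT (hU.monotone n) hM ht hf

theorem IsAbsorptionLimit.exists_tendsto_le [HasOrderContinuousNorm E]
    (hU : IsAbsorptionLimit T B U) (hT : IsPositiveC0Semigroup T) {L : ℕ → E →L[ℝ] E} {ε : ℝ}
    (hε : 0 < ε) (hBL : ∀ k, ∀ᶠ n in atTop, Monotone (B n - ε • L k))
    {R : ℕ → ℝ → E →L[ℝ] E}
    (hR : ∀ n, IsAbsorptionLimit T (fun m => L (n + m) - L n) (R n)) (ht : 0 ≤ t)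
    (hf : 0 ≤ f) : ∃ c : ℕ → E, Tendsto c atTop (𝓝 (U t f)) ∧ ∀ n, c n ≤ R n t f := by
  set a : ℕ → E := fun k => duhamelIntegral T (fun s => L k (U s f)) t
  have hmono : Monotone a := monotone_nat_of_le_succ fun k =>
    hU.duhamelIntegral_mono hT ht hf ((hR k).monotone 1)
  have hbdd : ∀ k, a k ≤ ε⁻¹ • T t f := fun k => by
    rw [le_inv_smul_iff_of_pos hε, ← duhamelIntegral_smul]
    exact hU.duhamelIntegral_le_apply hT ht hf (hBL k)
  obtain ⟨x, hx⟩ := HasOrderContinuousNorm.exists_tendsto a hmono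
    ⟨_, Set.forall_mem_range.2 hbdd⟩
  refine ⟨fun n => U t f - (x - a n), by simpa using hx.const_sub x |>.const_sub (U t f),
    fun n => ?_⟩
  obtain ⟨S, hS, hlim⟩ := (hR n).exists_tendsto
  rw [sub_le_comm]
  refine le_of_tendsto_of_tendsto' ((hlim t ht f).const_sub _)
    ((hx.comp (tendsto_add_atTop_nat n)).sub_const _) fun m => ?_
  calc U t f - S m t f
      ≤ duhamelIntegral T (fun s => (L (n + m) - L n) (U s f)) t :=
        hU.sub_apply_le hT (hS m) ((hR n).monotone m) ht hf
    _ = a (m + n) - a n := by rw [hU.duhamelIntegral_sub hT ht hf, add_comm]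

end BanachLattice

section Lp

variable {Ω : Type*} [MeasurableSpace Ω] {μ : Measure Ω} {p : ℝ≥0∞}

instance : IsOrderedModule ℝ (Lp ℝ p μ) :=
  .of_smul_nonneg fun c hc f hf => by
    rw [← Lp.coeFn_nonneg] at hf ⊢
    filter_upwards [hf, Lp.coeFn_smul c f] with ω hω hsmul
    rw [hsmul]
    exact mul_nonneg hc hω

theorem enorm_rpow_eq_lintegral (hp₀ : p ≠ 0) (hp : p ≠ ∞) (f : Lp ℝ p μ) :
    ‖f‖ₑ ^ p.toReal = ∫⁻ ω, ‖f ω‖ₑ ^ p.toReal ∂μ := by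
  rw [Lp.enorm_def, eLpNorm_eq_lintegral_rpow_enorm_toReal hp₀ hp, ← ENNReal.rpow_mul, one_div,
    inv_mul_cancel₀ (ENNReal.toReal_pos hp₀ hp).ne', ENNReal.rpow_one]

variable [Fact (1 ≤ p)] {M M₁ M₂ : Lp ℝ p μ →L[ℝ] Lp ℝ p μ} {W W₁ W₂ : Ω → ℝ}

theorem norm_rpow_add_norm_rpow_le (hp : p ≠ ∞) {f g : Lp ℝ p μ} (hf : 0 ≤ f) (hg : 0 ≤ g) :
    ‖f‖ ^ p.toReal + ‖g‖ ^ p.toReal ≤ ‖f + g‖ ^ p.toReal := by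
  have hp₁ : 1 ≤ p.toReal := (ENNReal.dichotomy p).resolve_left hp
  have hp₀ : p ≠ 0 := (zero_lt_one.trans_le (Fact.out : 1 ≤ p)).ne'
  have henorm : ‖f‖ₑ ^ p.toReal + ‖g‖ₑ ^ p.toReal ≤ ‖f + g‖ₑ ^ p.toReal := by
    rw [enorm_rpow_eq_lintegral hp₀ hp, enorm_rpow_eq_lintegral hp₀ hp,
      enorm_rpow_eq_lintegral hp₀ hp,
      ← lintegral_add_left' ((Lp.aestronglyMeasurable f).enorm.pow_const _)]
    refine lintegral_mono_ae ?_
    filter_upwards [(Lp.coeFn_nonneg f).2 hf, (Lp.coeFn_nonneg g).2 hg, Lp.coeFn_add f g]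
      with ω hfω hgω hadd
    rw [hadd, Pi.add_apply, Real.enorm_of_nonneg hfω, Real.enorm_of_nonneg hgω,
      Real.enorm_of_nonneg (add_nonneg hfω hgω), ENNReal.ofReal_add hfω hgω]
    exact ENNReal.add_rpow_le_rpow_add _ _ hp₁
  have hfin : ∀ h : Lp ℝ p μ, ‖h‖ₑ ^ p.toReal ≠ ∞ := fun h =>
    ENNReal.rpow_ne_top_of_nonneg (zero_le_one.trans hp₁) enorm_ne_top
  have hreal := ENNReal.toReal_mono (hfin _) henorm
  rw [ENNReal.toReal_add (hfin f) (hfin g)] at hreal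
  simpa only [← ENNReal.toReal_rpow, toReal_enorm] using hreal

theorem hasOrderContinuousNorm_Lp (hp : p ≠ ∞) : HasOrderContinuousNorm (Lp ℝ p μ) where
  exists_tendsto a ha := by
    rintro ⟨y, hy⟩
    have hp₀ : 0 < p.toReal :=
      zero_lt_one.trans_le ((ENNReal.dichotomy p).resolve_left hp)
    set b : ℕ → ℝ := fun n => ‖a n - a 0‖ ^ p.toReal
    have hincr : ∀ n m, n ≤ m → b n + ‖a m - a n‖ ^ p.toReal ≤ b m := fun n m hnm => by
      simpa [b] using norm_rpow_add_norm_rpow_le hp (sub_nonneg.2 (ha (Nat.zero_le n)))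
        (sub_nonneg.2 (ha hnm))
    have hb : Monotone b := fun n m hnm =>
      (le_add_of_nonneg_right (by positivity)).trans (hincr n m hnm)
    have hbdd : BddAbove (Set.range b) := ⟨‖y - a 0‖ ^ p.toReal, Set.forall_mem_range.2 fun n =>
      Real.rpow_le_rpow (norm_nonneg _) (norm_le_norm_of_nonneg_of_le
        (sub_nonneg.2 (ha (Nat.zero_le n))) (sub_le_sub_right (hy ⟨n, rfl⟩) _)) hp₀.le⟩
    have hcauchy : CauchySeq a := Metric.cauchySeq_iff'.2 fun η hη => by
      obtain ⟨N, hN⟩ := Metric.cauchySeq_iff'.1 (tendsto_atTop_ciSup hb hbdd).cauchySeq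
        (η ^ p.toReal) (Real.rpow_pos_of_pos hη _)
      refine ⟨N, fun n hn => ?_⟩
      rw [dist_eq_norm, ← Real.rpow_lt_rpow_iff (norm_nonneg _) hη.le hp₀]
      calc ‖a n - a N‖ ^ p.toReal ≤ b n - b N := le_sub_iff_add_le'.2 (hincr N n hn)
        _ ≤ dist (b n) (b N) := le_abs_self _
        _ < η ^ p.toReal := hN n hn
    exact cauchySeq_tendsto_of_complete hcauchy

/-- `M` is the operator of multiplication by the function `W`. A relation rather than a function
of `W`, because such an operator exists only for sufficiently regular `W`. -/
def IsMulOperator (M : Lp ℝ p μ →L[ℝ] Lp ℝ p μ) (W : Ω → ℝ) : Prop :=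
  ∀ f : Lp ℝ p μ, ⇑(M f) =ᵐ[μ] fun ω => W ω * f ω

theorem isMulOperator_smul_id (c : ℝ) :
    IsMulOperator (c • ContinuousLinearMap.id ℝ (Lp ℝ p μ)) fun _ => c :=
  fun f => Lp.coeFn_smul c f

theorem IsMulOperator.sub (h₁ : IsMulOperator M₁ W₁) (h₂ : IsMulOperator M₂ W₂) :
    IsMulOperator (M₁ - M₂) fun ω => W₁ ω - W₂ ω := fun f => by
  filter_upwards [h₁ f, h₂ f, Lp.coeFn_sub (M₁ f) (M₂ f)] with ω hω₁ hω₂ hsub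
  rw [sub_apply, hsub, Pi.sub_apply, hω₁, hω₂, sub_mul]

theorem IsMulOperator.const_smul (h : IsMulOperator M W) (c : ℝ) :
    IsMulOperator (c • M) fun ω => c * W ω := fun f => by
  filter_upwards [h f, Lp.coeFn_smul c (M f)] with ω hω hsmul
  rw [smul_apply, hsmul, Pi.smul_apply, hω, smul_eq_mul, mul_assoc]

theorem IsMulOperator.monotone (h : IsMulOperator M W) (hW : ∀ᵐ ω ∂μ, 0 ≤ W ω) :
    Monotone M :=
  (monotone_iff_map_nonneg M).2 fun f hf => by
    rw [← Lp.coeFn_nonneg] at hf ⊢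
    filter_upwards [h f, hW, hf] with ω hω hWω hfω
    rw [hω]
    exact mul_nonneg hWω hfω

theorem IsPerturbedSG.inGenerator_iff {T S : ℝ → Lp ℝ p μ →L[ℝ] Lp ℝ p μ}
    (h : IsPerturbedSG μ p T S W) (hM : IsMulOperator M W) (f g : Lp ℝ p μ) :
    InGenerator S f g ↔ InGenerator T f (g + M f) := by
  have hiff : ∀ g₀ : Lp ℝ p μ, (⇑g =ᵐ[μ] fun ω => g₀ ω - W ω * f ω) ↔ g₀ = g + M f := by
    intro g₀
    rw [← sub_eq_iff_eq_add, eq_comm, Lp.ext_iff]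
    refine ⟨fun hg => ?_, fun hg => ?_⟩ <;>
      filter_upwards [hg, hM f, Lp.coeFn_sub g₀ (M f)] with ω hω hMω hsub
    · rw [hω, hsub, Pi.sub_apply, hMω]
    · rw [hω, hsub, Pi.sub_apply, hMω]
  simp only [h.2 f g, hiff, exists_eq_right]

theorem LocallyMeasurable.comp {α β : Type*} [MeasurableSpace α] [MeasurableSpace β] {V : Ω → α}
    {φ : α → β} (hφ : Measurable φ) (hV : LocallyMeasurable μ V) :
    LocallyMeasurable μ fun ω => φ (V ω) := fun B hB hμB =>
  let ⟨g, hg, hVg⟩ := hV B hB hμB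
  ⟨fun ω => φ (g ω), hφ.comp hg, hVg.mono fun _ h => congrArg φ h⟩

theorem LocallyMeasurable.aemeasurable_restrict {α : Type*} [MeasurableSpace α] {V : Ω → α}
    (hV : LocallyMeasurable μ V) {s : Set Ω} (hs : MeasurableSet s)
    [SigmaFinite (μ.restrict s)] : AEMeasurable V (μ.restrict s) := by
  have hcover : s = ⋃ n, spanningSets (μ.restrict s) n ∩ s := by
    rw [← Set.iUnion_inter, iUnion_spanningSets, Set.univ_inter]
  rw [hcover]
  refine AEMeasurable.iUnion fun n => ?_
  have hspan := measurableSet_spanningSets (μ.restrict s) n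
  refine hV _ (hspan.inter hs) ?_
  rw [← Measure.restrict_apply hspan]
  exact measure_spanningSets_lt_top _ n

theorem LocallyMeasurable.aestronglyMeasurable_mul (hp : p ≠ ∞) (hW : LocallyMeasurable μ W)
    (f : Lp ℝ p μ) : AEStronglyMeasurable (fun ω => W ω * f ω) μ := by
  have hp₀ : p ≠ 0 := (zero_lt_one.trans_le (Fact.out : 1 ≤ p)).ne'
  obtain ⟨s, hs, hfs, hσ⟩ := (Lp.finStronglyMeasurable f hp₀ hp).exists_set_sigmaFinite
  have hrestrict : AEStronglyMeasurable (fun ω => W ω * f ω) (μ.restrict s) :=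
    (hW.aemeasurable_restrict hs).aestronglyMeasurable.mul (Lp.aestronglyMeasurable f).restrict
  convert (aestronglyMeasurable_indicator_iff hs).2 hrestrict using 1
  refine (Set.indicator_eq_self.2 fun ω hω => ?_).symm
  by_contra hωs
  exact hω (by simp [hfs ω hωs])

theorem exists_isMulOperator (hp : p ≠ ∞) (hW : LocallyMeasurable μ W) {C : ℝ}
    (hC : ∀ ω, |W ω| ≤ C) : ∃ M : Lp ℝ p μ →L[ℝ] Lp ℝ p μ, IsMulOperator M W := by
  have hbound : ∀ (f : Lp ℝ p μ) ω, ‖W ω * f ω‖ ≤ C * ‖f ω‖ := fun f ω => by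
    rw [norm_mul]
    exact mul_le_mul_of_nonneg_right (hC ω) (norm_nonneg _)
  have hmem : ∀ f : Lp ℝ p μ, MemLp (fun ω => W ω * f ω) p μ := fun f =>
    (Lp.memLp f).of_le_mul (hW.aestronglyMeasurable_mul hp f) (ae_of_all _ (hbound f))
  have hcoe : ∀ f, ⇑((hmem f).toLp _) =ᵐ[μ] fun ω => W ω * f ω := fun f => (hmem f).coeFn_toLp
  let L : Lp ℝ p μ →ₗ[ℝ] Lp ℝ p μ :=
    { toFun := fun f => (hmem f).toLp _
      map_add' := fun f g => Lp.ext <| by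
        filter_upwards [hcoe (f + g), hcoe f, hcoe g, Lp.coeFn_add f g,
          Lp.coeFn_add ((hmem f).toLp _) ((hmem g).toLp _)] with ω hfg hf hg hadd hadd'
        rw [hfg, hadd', Pi.add_apply, hf, hg, hadd, Pi.add_apply, mul_add]
      map_smul' := fun c f => Lp.ext <| by
        filter_upwards [hcoe (c • f), hcoe f, Lp.coeFn_smul c f,
          Lp.coeFn_smul c ((hmem f).toLp _)] with ω hcf hf hsmul hsmul'
        rw [hcf, RingHom.id_apply, hsmul', Pi.smul_apply, hf, hsmul, Pi.smul_apply,
          mul_smul_comm] }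
  refine ⟨L.mkContinuous C fun f => Lp.norm_le_mul_norm_of_ae_le_mul ?_, hcoe⟩
  filter_upwards [hcoe f] with ω hω
  exact (congrArg norm hω).trans_le (hbound f ω)

end Lp

section Rates

variable {Ω : Type*} {V : Ω → ℝ≥0∞} {ε : ℝ}

theorem trunc_nonneg (V : Ω → ℝ≥0∞) (n : ℕ) (ω : Ω) : 0 ≤ trunc V n ω :=
  ENNReal.toReal_nonneg

theorem trunc_le (V : Ω → ℝ≥0∞) (n : ℕ) (ω : Ω) : trunc V n ω ≤ n :=
  ENNReal.toReal_mono (ENNReal.natCast_ne_top n) (min_le_right (V ω) n)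

theorem min_natCast_ne_top (x : ℝ≥0∞) (n : ℕ) : min x n ≠ ∞ :=
  ne_top_of_le_ne_top (ENNReal.natCast_ne_top n) (min_le_right x n)

theorem trunc_add (V : Ω → ℝ≥0∞) (n m : ℕ) (ω : Ω) :
    trunc V (n + m) ω = trunc V n ω + trunc (resid V n) m ω := by
  simp only [trunc, resid]
  rw [← ENNReal.toReal_add (min_natCast_ne_top _ _) (min_natCast_ne_top _ _), Nat.cast_add]
  congr 1
  rcases le_total (V ω) n with h | h
  · rw [min_eq_left h, min_eq_left (h.trans le_self_add), tsub_self, min_eq_left zero_le, add_zero]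
  · obtain ⟨x, hx⟩ := exists_add_of_le h
    rw [min_eq_right h, hx, ENNReal.add_sub_cancel_left (ENNReal.natCast_ne_top n),
      min_add_add_left]

theorem mul_trunc_le_trunc_smulRate (hε₀ : 0 ≤ ε) (hε₁ : ε ≤ 1) {k j : ℕ} (hkj : k ≤ j)
    (ω : Ω) : ε * trunc V k ω ≤ trunc (smulRate ε V) j ω := by
  have hle : ENNReal.ofReal ε * min (V ω) k ≤ min (ENNReal.ofReal ε * V ω) j :=
    le_min (mul_le_mul_right (min_le_left _ _) _) <|
      (mul_le_of_le_one_left' (ENNReal.ofReal_le_one.2 hε₁)).trans <|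
        (min_le_right _ _).trans (Nat.cast_le.2 hkj)
  simpa [trunc, smulRate, hε₀] using ENNReal.toReal_mono (min_natCast_ne_top _ _) hle

theorem trunc_smulRate_le (hε₀ : 0 ≤ ε) (hε₁ : ε ≤ 1) (n k : ℕ) (ω : Ω) :
    trunc (smulRate ε V) k ω ≤ ε * n + trunc (resid V n) k ω := by
  have hε : ENNReal.ofReal ε ≤ 1 := ENNReal.ofReal_le_one.2 hε₁
  have hle : min (ENNReal.ofReal ε * V ω) k ≤
      ENNReal.ofReal ε * n + min (V ω - min (V ω) n) k := by
    rw [← min_add_add_left]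
    refine min_le_min ?_ le_add_self
    calc ENNReal.ofReal ε * V ω
        ≤ ENNReal.ofReal ε * (min (V ω) n + (V ω - min (V ω) n)) := by gcongr; exact le_add_tsub
      _ ≤ ENNReal.ofReal ε * n + (V ω - min (V ω) n) := by
          rw [mul_add]
          exact add_le_add (mul_le_mul_right (min_le_right _ _) _) (mul_le_of_le_one_left' hε)
  have hfin : ENNReal.ofReal ε * n ≠ ∞ := ENNReal.mul_ne_top ENNReal.ofReal_ne_top (by simp)
  have hreal := ENNReal.toReal_mono (ENNReal.add_ne_top.2 ⟨hfin, min_natCast_ne_top _ _⟩) hle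
  rw [ENNReal.toReal_add hfin (min_natCast_ne_top _ _)] at hreal
  simpa [trunc, smulRate, resid, hε₀] using hreal

end Rates

section AbsorptionRates

variable {Ω : Type*} [MeasurableSpace Ω] {μ : Measure Ω} {p : ℝ≥0∞} [Fact (1 ≤ p)]
  {T U : ℝ → Lp ℝ p μ →L[ℝ] Lp ℝ p μ} {V : Ω → ℝ≥0∞} {ε t : ℝ} {f : Lp ℝ p μ}

theorem IsPositiveSG.isPositiveC0Semigroup (hTpos : IsPositiveSG T) (hT : IsC0Semigroup T) :
    IsPositiveC0Semigroup T :=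
  ⟨hT, fun t ht => (monotone_iff_map_nonneg (T t)).2 (hTpos t ht)⟩

theorem LocallyMeasurable.exists_isMulOperator_trunc (hp : p ≠ ∞) (hV : LocallyMeasurable μ V) :
    ∃ M : ℕ → Lp ℝ p μ →L[ℝ] Lp ℝ p μ, ∀ n, IsMulOperator (M n) (trunc V n) := by
  refine Classical.skolem.1 fun n : ℕ => exists_isMulOperator hp (C := (n : ℝ))
    (hV.comp (φ := fun x => (min x (n : ℝ≥0∞)).toReal) (by fun_prop)) fun ω => ?_
  exact (abs_of_nonneg (trunc_nonneg V n ω)).trans_le (trunc_le V n ω)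

theorem IsAbsorptionSG.isAbsorptionLimit (hU : IsAbsorptionSG μ p T V U)
    (hT : IsPositiveC0Semigroup T) {M : ℕ → Lp ℝ p μ →L[ℝ] Lp ℝ p μ}
    (hM : ∀ n, IsMulOperator (M n) (trunc V n)) : IsAbsorptionLimit T M U := by
  obtain ⟨S, hS, hlim⟩ := hU
  have hbound : ∀ n : ℕ, Monotone ((n : ℝ) • ContinuousLinearMap.id ℝ (Lp ℝ p μ) - M n) := fun n =>
    ((isMulOperator_smul_id _).sub (hM n)).monotone
      (ae_of_all _ fun ω => sub_nonneg.2 (trunc_le V n ω))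
  exact ⟨fun n => (hM n).monotone (ae_of_all _ (trunc_nonneg V n)), S, fun n =>
    hT.isPositivePerturbation (hS n).1 ((hS n).inGenerator_iff (hM n)) (hbound n), hlim⟩

theorem IsAbsorptionSG.apply_le (hU : IsAbsorptionSG μ p T V U) (hp : p ≠ ∞)
    (hV : LocallyMeasurable μ V) (hT : IsPositiveC0Semigroup T) (ht : 0 ≤ t) (hf : 0 ≤ f) :
    U t f ≤ T t f :=
  let ⟨_, hM⟩ := hV.exists_isMulOperator_trunc hp
  (hU.isAbsorptionLimit hT hM).apply_le hT ht hf

theorem LocallyMeasurable.smulRate (hV : LocallyMeasurable μ V) (ε : ℝ) :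
    LocallyMeasurable μ (smulRate ε V) :=
  hV.comp (φ := fun x => ENNReal.ofReal ε * x) (by fun_prop)

theorem LocallyMeasurable.resid (hV : LocallyMeasurable μ V) (n : ℕ) :
    LocallyMeasurable μ (resid V n) :=
  hV.comp (φ := fun x => x - min x (n : ℝ≥0∞)) (by fun_prop)

theorem IsAbsorptionSG.exp_smul_resid_apply_le {R : ℝ → Lp ℝ p μ →L[ℝ] Lp ℝ p μ} {n : ℕ}
    (hU : IsAbsorptionSG μ p T (smulRate ε V) U) (hR : IsAbsorptionSG μ p T (resid V n) R)
    (hp : p ≠ ∞) (hV : LocallyMeasurable μ V) (hT : IsPositiveC0Semigroup T) (hε₀ : 0 ≤ ε)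
    (hε₁ : ε ≤ 1) (ht : 0 ≤ t) (hf : 0 ≤ f) : Real.exp (-(ε * n * t)) • R t f ≤ U t f := by
  obtain ⟨L, hL⟩ := (hV.resid n).exists_isMulOperator_trunc hp
  obtain ⟨M, hM⟩ := (hV.smulRate ε).exists_isMulOperator_trunc hp
  refine (hR.isAbsorptionLimit hT hL).exp_smul_apply_le (hU.isAbsorptionLimit hT hM)
    (fun k => ?_) ht hf
  refine ((isMulOperator_smul_id _).sub ((hM k).sub (hL k))).monotone (ae_of_all _ fun ω => ?_)
  rw [sub_nonneg, sub_le_iff_le_add]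
  exact trunc_smulRate_le hε₀ hε₁ n k ω

theorem IsAbsorptionSG.exists_tendsto_le_resid_apply {R : ℕ → ℝ → Lp ℝ p μ →L[ℝ] Lp ℝ p μ}
    (hU : IsAbsorptionSG μ p T (smulRate ε V) U) (hR : ∀ n, IsAbsorptionSG μ p T (resid V n) (R n))
    (hp : p ≠ ∞) (hV : LocallyMeasurable μ V) (hT : IsPositiveC0Semigroup T) (hε₀ : 0 < ε)
    (hε₁ : ε ≤ 1) (ht : 0 ≤ t) (hf : 0 ≤ f) :
    ∃ c : ℕ → Lp ℝ p μ, Tendsto c atTop (𝓝 (U t f)) ∧ ∀ n, c n ≤ R n t f := by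
  have := hasOrderContinuousNorm_Lp (μ := μ) hp
  obtain ⟨L, hL⟩ := hV.exists_isMulOperator_trunc hp
  obtain ⟨M, hM⟩ := (hV.smulRate ε).exists_isMulOperator_trunc hp
  refine (hU.isAbsorptionLimit hT hM).exists_tendsto_le hT hε₀ (L := L) (fun k => ?_) (fun n => ?_)
    ht hf
  · filter_upwards [eventually_ge_atTop k] with j hkj
    exact ((hM j).sub ((hL k).const_smul ε)).monotone
      (ae_of_all _ fun ω => sub_nonneg.2 (mul_trunc_le_trunc_smulRate hε₀.le hε₁ hkj ω))
  · refine (hR n).isAbsorptionLimit hT fun m => ?_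
    simpa only [trunc_add, add_sub_cancel_left] using (hL (n + m)).sub (hL n)

end AbsorptionRates

end Absorption

theorem statement1_general {Ω : Type*} [MeasurableSpace Ω] {μ : Measure Ω} {p : ℝ≥0∞}
    [Fact (1 ≤ p)] (hp : p ≠ ∞) {T : ℝ → Lp ℝ p μ →L[ℝ] Lp ℝ p μ} (hT : IsC0Semigroup T)
    (hTpos : IsPositiveSG T) {V : Ω → ℝ≥0∞} (hV : LocallyMeasurable μ V)
    {Sε : ℝ → ℝ → Lp ℝ p μ →L[ℝ] Lp ℝ p μ}
    (hSε : ∀ ε : ℝ, 0 < ε → ε ≤ 1 → IsAbsorptionSG μ p T (smulRate ε V) (Sε ε))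
    {R : ℕ → ℝ → Lp ℝ p μ →L[ℝ] Lp ℝ p μ}
    (hR : ∀ n : ℕ, IsAbsorptionSG μ p T (resid V n) (R n)) :
    (∀ t : ℝ, 0 ≤ t → ∀ f : Lp ℝ p μ,
        Tendsto (fun ε : ℝ => Sε ε t f) (𝓝[>] (0 : ℝ)) (𝓝 (T t f))) ↔
    (∀ t : ℝ, 0 ≤ t → ∀ f : Lp ℝ p μ,
        Tendsto (fun n : ℕ => R n t f) atTop (𝓝 (T t f))) := by
  have hT' := hTpos.isPositiveC0Semigroup hT
  have hsmall : Set.Ioc (0 : ℝ) 1 ∈ 𝓝[>] 0 := Ioc_mem_nhdsGT zero_lt_one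
  refine ⟨fun hreg t ht => tendsto_apply_of_forall_nonneg fun f hf => ?_,
    fun hstrong t ht => tendsto_apply_of_forall_nonneg fun f hf => ?_⟩
  · refine tendsto_of_approx_le (hreg t ht f)
      (.of_forall fun n => (hR n).apply_le hp (hV.resid n) hT' ht hf) ?_
    filter_upwards [hsmall] with ε ⟨hε₀, hε₁⟩
    obtain ⟨c, hc, hcR⟩ :=
      (hSε ε hε₀ hε₁).exists_tendsto_le_resid_apply hR hp hV hT' hε₀ hε₁ ht hf
    exact ⟨c, hc, .of_forall hcR⟩
  · refine tendsto_of_approx_le (hstrong t ht f) ?_ (.of_forall fun n =>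
      ⟨fun ε => Real.exp (-(ε * n * t)) • R n t f, ?_, ?_⟩)
    · filter_upwards [hsmall] with ε ⟨hε₀, hε₁⟩
      exact (hSε ε hε₀ hε₁).apply_le hp (hV.smulRate ε) hT' ht hf
    · have hcont : Continuous fun ε : ℝ => Real.exp (-(ε * n * t)) • R n t f := by fun_prop
      simpa using (hcont.tendsto 0).mono_left nhdsWithin_le_nhds
    · filter_upwards [hsmall] with ε ⟨hε₀, hε₁⟩
      exact (hSε ε hε₀ hε₁).exp_smul_resid_apply_le (hR n) hp hV hT' hε₀.le hε₁ ht hf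

/-- A `T`-admissible absorption rate `V : Ω → [0,∞]` is `T`-regular
(`s-lim_{ε→0+} T_{εV} = T`) if and only if it is strongly `T`-regular
(`s-lim_{n→∞} T_{V−V∧n} = T`). -/
theorem statement1
    {Ω : Type*} [MeasurableSpace Ω] (μ : Measure Ω) (p : ℝ≥0∞) [Fact (1 ≤ p)] (hp : p ≠ ∞)
    (T : ℝ → Lp ℝ p μ →L[ℝ] Lp ℝ p μ)
    (hT : IsC0Semigroup T) (hTpos : IsPositiveSG T)
    (V : Ω → ℝ≥0∞) (hV : Admissible μ p T V)
    -- the absorption semigroups `T_{εV}` for `ε ∈ (0,1]`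
    (Sε : ℝ → ℝ → Lp ℝ p μ →L[ℝ] Lp ℝ p μ)
    (hSε : ∀ ε : ℝ, 0 < ε → ε ≤ 1 → IsAbsorptionSG μ p T (smulRate ε V) (Sε ε))
    -- the absorption semigroups `T_{V − V∧n}`
    (R : ℕ → ℝ → Lp ℝ p μ →L[ℝ] Lp ℝ p μ)
    (hR : ∀ n : ℕ, IsAbsorptionSG μ p T (resid V n) (R n)) :
    -- `V` is `T`-regular ↔ `V` is strongly `T`-regular
    (∀ t : ℝ, 0 ≤ t → ∀ f : Lp ℝ p μ,
        Tendsto (fun ε : ℝ => Sε ε t f) (𝓝[>] (0 : ℝ)) (𝓝 (T t f))) ↔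
    (∀ t : ℝ, 0 ≤ t → ∀ f : Lp ℝ p μ,
        Tendsto (fun n : ℕ => R n t f) atTop (𝓝 (T t f))) := by
  exact statement1_general hp hT hTpos hV.1 hSε hR
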